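/- arXiv:1203.1955 — 4 statements merged into one kernel-verified Lean document; each statement's English description precedes it below -/
import Mathlib

section
/- Let R be a commutative noetherian local ring and let X be any class of finitely generated R-modules. Then V(⋂_{i>0, M ∈ X, L finite length} Ann_R Ext_R^i(M,L)) = V(⋂_{i>0, M ∈ X, N} Ann_R Ext_R^i(M,N)), where L ranges over all finite-length R-modules and N ranges over all finitely generated R-modules. -/
open CategoryTheory IsLocalRing

noncomputable section

/-- The `i`-th Tor module of two `R`-modules, as an object of `ModuleCat R`. -/
def TorMod (R : Type) [CommRing R] (i : ℕ) (M N : ModuleCat.{0} R) : ModuleCat.{0} R :=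
  ((Tor (ModuleCat.{0} R) i).obj M).obj N

/-- The `i`-th Ext module of two `R`-modules, as an object of `ModuleCat R`. -/
def ExtMod (R : Type) [CommRing R] (i : ℕ) (M N : ModuleCat.{0} R) : ModuleCat.{0} R :=
  ((Ext R (ModuleCat.{0} R) i).obj (Opposite.op M)).obj N

/-- Integer-indexed Tor: `Tor_n = 0` for `n < 0`. -/
def TorZ (R : Type) [CommRing R] (n : ℤ) (M N : ModuleCat.{0} R) : ModuleCat.{0} R :=
  if 0 ≤ n then TorMod R n.toNat M N else ModuleCat.of R PUnit

/-- Integer-indexed Ext: `Ext^n = 0` for `n < 0`. -/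
def ExtZ (R : Type) [CommRing R] (n : ℤ) (M N : ModuleCat.{0} R) : ModuleCat.{0} R :=
  if 0 ≤ n then ExtMod R n.toNat M N else ModuleCat.of R PUnit

/-- The depth of a module `N` over a local ring `S`, defined as the infimum of the set of
integers `i` such that `Ext^i(k, N) ≠ 0`, where `k` is the residue field of `S`
(`⊤` if no such `i` exists). -/
def moduleDepth (S : Type) [CommRing S] [IsLocalRing S] (N : Type) [AddCommGroup N]
    [Module S N] : ℕ∞ :=
  sInf {i : ℕ∞ | ∃ j : ℕ, i = (j : ℕ∞) ∧
    Nontrivial (ExtMod S j (ModuleCat.of S (ResidueField S)) (ModuleCat.of S N))}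

/-- A local ring is regular if it is noetherian and its maximal ideal can be generated by
(Krull dimension of `S`)-many elements. -/
def IsRegularLocal (S : Type) [CommRing S] [IsLocalRing S] : Prop :=
  IsNoetherianRing S ∧ ∃ s : Finset S, Ideal.span (s : Set S) = maximalIdeal S ∧
    (s.card : WithBot ℕ∞) = ringKrullDim S

/-- A local ring is Cohen-Macaulay if its depth (as a module over itself) equals its
Krull dimension. -/
def IsCMLocalRing (R : Type) [CommRing R] [IsLocalRing R] : Prop :=
  (moduleDepth R R : WithBot ℕ∞) = ringKrullDim R

/-- A module `M` over a local ring `R` is maximal Cohen-Macaulay if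
`depth M_p ≥ dim R_p` for every prime ideal `p` of `R`. -/
def IsMCMModule (R : Type) [CommRing R] [IsLocalRing R] (M : Type) [AddCommGroup M]
    [Module R M] : Prop :=
  ∀ (p : Ideal R) [p.IsPrime],
    ringKrullDim (Localization.AtPrime p) ≤
      (moduleDepth (Localization.AtPrime p) (LocalizedModule p.primeCompl M) : WithBot ℕ∞)

/-- Membership in `CM(R)`: finitely generated maximal Cohen-Macaulay modules. -/
def MemCM (R : Type) [CommRing R] [IsLocalRing R] (M : ModuleCat.{0} R) : Prop :=
  Module.Finite R M ∧ IsMCMModule R M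

/-- Membership in `CM₀(R)`: finitely generated maximal Cohen-Macaulay modules that are
locally free on the punctured spectrum. -/
def MemCM0 (R : Type) [CommRing R] [IsLocalRing R] (M : ModuleCat.{0} R) : Prop :=
  Module.Finite R M ∧ IsMCMModule R M ∧
    ∀ (p : Ideal R) [p.IsPrime], p ≠ maximalIdeal R →
      Module.Free (Localization.AtPrime p) (LocalizedModule p.primeCompl M)

/-- The singular locus of `R`: primes `p` such that `R_p` is not regular. -/
def singularLocus (R : Type) [CommRing R] : Set (PrimeSpectrum R) :=
  {p | ¬ IsRegularLocal (Localization.AtPrime p.asIdeal)}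

/-- The nonfree locus of a module `M`: primes `p` such that `M_p` is not a free
`R_p`-module. -/
def nonfreeLocus (R : Type) [CommRing R] (M : Type) [AddCommGroup M] [Module R M] :
    Set (PrimeSpectrum R) :=
  {p | ¬ Module.Free (Localization.AtPrime p.asIdeal)
        (LocalizedModule p.asIdeal.primeCompl M)}

/-- `K` is a first syzygy of `N` in a minimal free resolution: there is a surjection
`f : R^n → N` with `ker f ⊆ m·R^n` and `K ≅ ker f`. -/
def IsMinimalSyzygy1 (R : Type) [CommRing R] [IsLocalRing R] (N K : ModuleCat.{0} R) : Prop :=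
  ∃ (n : ℕ) (f : (Fin n → R) →ₗ[R] N), Function.Surjective f ∧
    LinearMap.ker f ≤ (maximalIdeal R) • (⊤ : Submodule R (Fin n → R)) ∧
    Nonempty (K ≃ₗ[R] LinearMap.ker f)

/-- `K` is a `d`-th syzygy of `N` in a minimal free resolution. -/
def IsMinimalSyzygy (R : Type) [CommRing R] [IsLocalRing R] :
    ℕ → ModuleCat.{0} R → ModuleCat.{0} R → Prop
  | 0, N, K => Nonempty ((K : Type) ≃ₗ[R] N)
  | d + 1, N, K => ∃ L : ModuleCat.{0} R, IsMinimalSyzygy1 R N L ∧ IsMinimalSyzygy R d L K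

/-- A module is indecomposable if it is nonzero and is not isomorphic to the direct sum of
two nonzero modules. -/
def IndecomposableModule (R : Type) [CommRing R] (M : Type) [AddCommGroup M] [Module R M] :
    Prop :=
  Nontrivial M ∧ ∀ (A B : Type) [AddCommGroup A] [Module R A] [AddCommGroup B] [Module R B],
    Nonempty (M ≃ₗ[R] A × B) → (Subsingleton A ∨ Subsingleton B)

/-!
Compute `Ext` from a resolution `P` of `M` by finitely generated projective modules. An element `r`
kills `Ext^{i+1}(M, N)` iff `r • z` is a coboundary for every cocycle `z : P_{i+1} → N`. For a
maximal ideal `𝔪`, the module `N / 𝔪ⁿN` has finite length, so if `r` kills every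
`Ext^{i+1}(M, L)` with `L` of finite length, then `r • z` is a coboundary modulo `𝔪ⁿN`. As `P_i` is
projective that coboundary lifts to `N`, and as `P_{i+1}` is finitely generated projective the error
lies in `𝔪ⁿ Hom(P_{i+1}, N)`. By Krull's intersection theorem the submodule of coboundaries is
closed for all these topologies together, hence contains `r • z`. The two intersections of
annihilators are thus equal already as ideals, over any noetherian ring.
-/

universe u

section Separation

variable {R T : Type*} [CommRing R] [IsNoetherianRing R] [AddCommGroup T] [Module R T]
  [Module.Finite R T]

theorem eq_zero_of_forall_mem_isMaximal_pow_smul_top {x : T}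
    (hx : ∀ (m : Ideal R) [m.IsMaximal] (n : ℕ), x ∈ m ^ n • (⊤ : Submodule R T)) : x = 0 := by
  by_contra hx0
  have ann_ne_top : Ideal.torsionOf R T x ≠ ⊤ := mt (Ideal.torsionOf_eq_top_iff R x).mp hx0
  obtain ⟨m, hm, ann_le⟩ := Ideal.exists_le_maximal _ ann_ne_top
  obtain ⟨⟨r, hr⟩, hrx⟩ :=
    (m.mem_iInf_smul_pow_eq_bot_iff x).mp ((Submodule.mem_iInf _).mpr fun n => hx m n)
  have one_sub_mem : 1 - r ∈ m := ann_le <| by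
    rw [Ideal.mem_torsionOf_iff, sub_smul, one_smul, hrx, sub_self]
  exact hm.ne_top ((Ideal.eq_top_iff_one m).mpr (by simpa using m.add_mem one_sub_mem hr))

theorem mem_of_forall_mem_sup_isMaximal_pow_smul_top {B : Submodule R T} {x : T}
    (hx : ∀ (m : Ideal R) [m.IsMaximal] (n : ℕ), x ∈ B ⊔ m ^ n • (⊤ : Submodule R T)) :
    x ∈ B := by
  rw [← Submodule.Quotient.mk_eq_zero]
  refine eq_zero_of_forall_mem_isMaximal_pow_smul_top (R := R) fun m _ n => ?_
  have map_eq : (B ⊔ m ^ n • (⊤ : Submodule R T)).map B.mkQ = m ^ n • ⊤ := by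
    rw [Submodule.map_sup, Submodule.mkQ_map_self, bot_sup_eq, Submodule.map_smul'',
      Submodule.map_top, Submodule.range_mkQ]
  exact map_eq ▸ Submodule.mem_map_of_mem (hx m n)

theorem isArtinianRing_quotient_isMaximal_pow (m : Ideal R) [m.IsMaximal] (n : ℕ) :
    IsArtinianRing (R ⧸ m ^ n) := by
  rw [isArtinianRing_iff_krullDimLE_zero,
    Ideal.krullDimLE_zero_quotient_iff_forall_minimalPrimes_isMaximal]
  rintro p ⟨⟨hp, pow_le⟩, -⟩
  rwa [← Ideal.IsMaximal.eq_of_le ‹m.IsMaximal› hp.ne_top (hp.le_of_pow_le pow_le)]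

theorem isFiniteLength_quotient_isMaximal_pow_smul_top (m : Ideal R) [m.IsMaximal] (n : ℕ) :
    IsFiniteLength R (T ⧸ m ^ n • (⊤ : Submodule R T)) := by
  have := isArtinianRing_quotient_isMaximal_pow m n
  have : Module.Finite (R ⧸ m ^ n) (T ⧸ m ^ n • (⊤ : Submodule R T)) :=
    Module.Finite.of_restrictScalars_finite R _ _
  exact isFiniteLength_iff_isNoetherian_isArtinian.mpr ⟨inferInstance,
    isArtinian_of_surjective_algebraMap (R := R ⧸ m ^ n) Ideal.Quotient.mk_surjective⟩

end Separation

section Factorization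

variable {R P₀ P₁ N : Type*} [CommRing R] [AddCommGroup P₀] [Module R P₀]
  [AddCommGroup P₁] [Module R P₁] [AddCommGroup N] [Module R N]

theorem linearMap_mem_smul_top_of_range_le [Module.Finite R P₁] [Module.Projective R P₁]
    {I : Ideal R} {f : P₁ →ₗ[R] N} (hf : LinearMap.range f ≤ I • ⊤) :
    f ∈ I • (⊤ : Submodule R (P₁ →ₗ[R] N)) := by
  obtain ⟨n, p, s, -, -, hps⟩ := Module.Finite.exists_comp_eq_id_of_projective R P₁
  let coord (j : Fin n) : N →ₗ[R] P₁ →ₗ[R] N := LinearMap.smulRightₗ (LinearMap.proj j ∘ₗ s)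
  have sum_coord : f = ∑ j, coord j (f (p (Pi.single j 1))) := by
    ext x
    conv_lhs =>
      rw [← LinearMap.id_apply (R := R) x, ← hps, LinearMap.comp_apply,
        ← (Pi.basisFun R (Fin n)).sum_repr (s x)]
    simp [coord]
  rw [sum_coord]
  refine Submodule.sum_mem _ fun j _ => ?_
  have map_le : (I • (⊤ : Submodule R N)).map (coord j) ≤ I • ⊤ := by
    rw [Submodule.map_smul'']
    exact Submodule.smul_mono le_rfl le_top
  exact map_le (Submodule.mem_map_of_mem (hf ⟨_, rfl⟩))

theorem mem_range_lcomp_sup_smul_top [Module.Projective R P₀] [Module.Finite R P₁]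
    [Module.Projective R P₁] {I : Ideal R} {d : P₁ →ₗ[R] P₀} {f : P₁ →ₗ[R] N}
    {w : P₀ →ₗ[R] N ⧸ I • (⊤ : Submodule R N)} (hw : w ∘ₗ d = Submodule.mkQ _ ∘ₗ f) :
    f ∈ LinearMap.range (LinearMap.lcomp R N d) ⊔ I • ⊤ := by
  obtain ⟨v, hv⟩ := Module.projective_lifting_property _ w (Submodule.mkQ_surjective _)
  have error_mem : f - v ∘ₗ d ∈ I • (⊤ : Submodule R (P₁ →ₗ[R] N)) := by
    refine linearMap_mem_smul_top_of_range_le ?_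
    rw [← Submodule.ker_mkQ (I • (⊤ : Submodule R N)), LinearMap.range_le_ker_iff,
      LinearMap.comp_sub, ← LinearMap.comp_assoc, hv, hw, sub_self]
  exact Submodule.mem_sup.mpr ⟨v ∘ₗ d, ⟨v, rfl⟩, _, error_mem, add_sub_cancel _ _⟩

theorem exists_comp_eq_of_forall_isMaximal_pow [IsNoetherianRing R] [Module.Projective R P₀]
    [Module.Finite R P₁] [Module.Projective R P₁] [Module.Finite R N]
    {d : P₁ →ₗ[R] P₀} {f : P₁ →ₗ[R] N}
    (h : ∀ (m : Ideal R) [m.IsMaximal] (n : ℕ),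
      ∃ w : P₀ →ₗ[R] N ⧸ m ^ n • (⊤ : Submodule R N), w ∘ₗ d = Submodule.mkQ _ ∘ₗ f) :
    ∃ w : P₀ →ₗ[R] N, w ∘ₗ d = f := by
  suffices f ∈ LinearMap.range (LinearMap.lcomp R N d) from this
  refine mem_of_forall_mem_sup_isMaximal_pow_smul_top fun m _ n => ?_
  obtain ⟨w, hw⟩ := h m n
  exact mem_range_lcomp_sup_smul_top hw

end Factorization

section FiniteResolution

variable {R : Type u} [CommRing R] [IsNoetherianRing R]

theorem fgModuleCat_epi_iff_surjective {M N : FGModuleCat.{u} R} (f : M ⟶ N) :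
    Epi f ↔ Function.Surjective f.hom.hom := by
  rw [← (forget₂ (FGModuleCat.{u} R) (ModuleCat.{u} R)).epi_map_iff_epi]
  exact ModuleCat.epi_iff_surjective _

theorem fgModuleCat_projective_iff (P : FGModuleCat.{u} R) :
    Projective P ↔ Module.Projective R P := by
  constructor
  · intro _
    obtain ⟨n, f, hf⟩ := Module.Finite.exists_fin' R P
    let F : FGModuleCat.of R (Fin n → R) ⟶ P := ⟨ModuleCat.ofHom f⟩
    have : Epi F := (fgModuleCat_epi_iff_surjective F).mpr hf
    have splits : Projective.factorThru (𝟙 P) F ≫ F = 𝟙 P := Projective.factorThru_comp _ _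
    exact Module.Projective.of_split (Projective.factorThru (𝟙 P) F).hom.hom f
      (congrArg (fun g => g.hom.hom) splits)
  · refine fun _ => ⟨fun f e _ => ?_⟩
    obtain ⟨g, hg⟩ := Module.projective_lifting_property e.hom.hom f.hom.hom
      ((fgModuleCat_epi_iff_surjective e).mp inferInstance)
    exact ⟨⟨ModuleCat.ofHom g⟩, FGModuleCat.hom_ext hg⟩

instance fgModuleCat_enoughProjectives : EnoughProjectives (FGModuleCat.{u} R) where
  presentation M := by
    obtain ⟨n, f, hf⟩ := Module.Finite.exists_fin' R M
    exact ⟨{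
      p := FGModuleCat.of R (Fin n → R)
      projective := (fgModuleCat_projective_iff _).mpr
        (inferInstanceAs (Module.Projective R (Fin n → R)))
      f := ⟨ModuleCat.ofHom f⟩
      epi := (fgModuleCat_epi_iff_surjective _).mpr hf }⟩

instance fgModuleCat_forget₂_preservesProjectiveObjects :
    (forget₂ (FGModuleCat.{u} R) (ModuleCat.{u} R)).PreservesProjectiveObjects where
  projective_obj {P} hP :=
    (IsProjective.iff_projective P).mp ((fgModuleCat_projective_iff P).mp hP)

theorem exists_projectiveResolution_forall_finite (M : ModuleCat.{u} R) [Module.Finite R M] :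
    ∃ P : ProjectiveResolution M, ∀ i, Module.Finite R (P.complex.X i) :=
  let Q := ProjectiveResolution.of (FGModuleCat.of R M)
  ⟨(forget₂ (FGModuleCat.{u} R) (ModuleCat.{u} R)).mapProjectiveResolution Q,
    fun i => (Q.complex.X i).property⟩

end FiniteResolution

section Annihilator

theorem mem_annihilator_homology_iff {R : Type*} [CommRing R] (S : ShortComplex (ModuleCat R))
    (r : R) :
    r ∈ Module.annihilator R S.homology ↔ ∀ z, S.g z = 0 → ∃ w, S.f w = r • z := by
  rw [S.moduleCatHomologyIso.toLinearEquiv.annihilator_eq, Module.mem_annihilator]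
  have smul_mk_eq_zero_iff (z : LinearMap.ker S.g.hom) :
      r • Submodule.Quotient.mk (p := LinearMap.range S.moduleCatToCycles) z = 0 ↔
        ∃ w, S.f w = r • z.1 := by
    rw [← Submodule.Quotient.mk_smul, Submodule.Quotient.mk_eq_zero]
    exact exists_congr fun w => Subtype.ext_iff
  exact (Submodule.Quotient.mk_surjective _).forall.trans
    ((forall_congr' smul_mk_eq_zero_iff).trans Subtype.forall)

theorem mem_annihilator_ext_succ_iff {R C : Type*} [CommRing R] [Category* C] [Abelian C]
    [Linear R C] [EnoughProjectives C] {M : C} (P : ProjectiveResolution M) (N : C) (i : ℕ)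
    (r : R) :
    r ∈ Module.annihilator R (((Ext R C (i + 1)).obj (Opposite.op M)).obj N) ↔
      ∀ z : P.complex.X (i + 1) ⟶ N, P.complex.d (i + 2) (i + 1) ≫ z = 0 →
        ∃ w : P.complex.X i ⟶ N, P.complex.d (i + 1) i ≫ w = r • z := by
  let K := P.complex.linearYonedaObj R N
  let e := P.isoExt (R := R) (i + 1) N ≪≫
    K.homologyIsoSc' i (i + 1) (i + 2) (by simp) (by simp)
  rw [e.toLinearEquiv.annihilator_eq]
  exact mem_annihilator_homology_iff _ r

theorem mem_annihilator_ext_succ_of_isFiniteLength {R : Type u} [CommRing R] [IsNoetherianRing R]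
    {M N : ModuleCat.{u} R} [Module.Finite R M] [Module.Finite R N] {i : ℕ} {r : R}
    (h : ∀ L : ModuleCat.{u} R, IsFiniteLength R L →
      r ∈ Module.annihilator R (((Ext R (ModuleCat.{u} R) (i + 1)).obj (Opposite.op M)).obj L)) :
    r ∈ Module.annihilator R (((Ext R (ModuleCat.{u} R) (i + 1)).obj (Opposite.op M)).obj N) := by
  obtain ⟨P, hP⟩ := exists_projectiveResolution_forall_finite M
  simp only [mem_annihilator_ext_succ_iff P] at h ⊢
  intro z hz
  have := hP (i + 1)
  obtain ⟨w, hw⟩ : ∃ w, w ∘ₗ (P.complex.d (i + 1) i).hom = r • z.hom := by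
    refine exists_comp_eq_of_forall_isMaximal_pow fun m _ n => ?_
    let π := ModuleCat.ofHom (m ^ n • (⊤ : Submodule R N)).mkQ
    obtain ⟨w, hw⟩ := h _ (isFiniteLength_quotient_isMaximal_pow_smul_top m n) (z ≫ π)
      (by rw [← Category.assoc, hz, Limits.zero_comp])
    exact ⟨w.hom, by simpa [π, LinearMap.comp_smul] using congrArg ModuleCat.Hom.hom hw⟩
  exact ⟨ModuleCat.ofHom w, ModuleCat.hom_ext hw⟩

end Annihilator

theorem stmt11_general {R : Type u} [CommRing R] [IsNoetherianRing R]
    (X : Set (ModuleCat.{u} R)) (hX : ∀ M ∈ X, Module.Finite R M) :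
    (⨅ (i : ℕ) (_ : 0 < i) (M : ModuleCat.{u} R) (_ : M ∈ X)
        (L : ModuleCat.{u} R) (_ : IsFiniteLength R L),
        Module.annihilator R (((Ext R (ModuleCat.{u} R) i).obj (Opposite.op M)).obj L)) =
      ⨅ (i : ℕ) (_ : 0 < i) (M : ModuleCat.{u} R) (_ : M ∈ X)
        (N : ModuleCat.{u} R) (_ : Module.Finite R N),
        Module.annihilator R (((Ext R (ModuleCat.{u} R) i).obj (Opposite.op M)).obj N) := by
  ext r
  simp only [Submodule.mem_iInf]
  constructor
  · intro hr i hi M hM N _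
    obtain ⟨i, rfl⟩ := Nat.exists_eq_add_one_of_ne_zero hi.ne'
    have := hX M hM
    exact mem_annihilator_ext_succ_of_isFiniteLength (hr (i + 1) hi M hM)
  · intro hr i hi M hM L hL
    have := (isFiniteLength_iff_isNoetherian_isArtinian.mp hL).1
    exact hr i hi M hM L inferInstance

/-- Let `R` be a noetherian local ring and `X` a class of finitely
generated `R`-modules. Then `V(⋂_{i>0, M ∈ X, L fin.length} Ann Ext^i(M,L)) =
V(⋂_{i>0, M ∈ X, N f.g.} Ann Ext^i(M,N))`. -/
theorem stmt11 (R : Type) [CommRing R] [IsNoetherianRing R] [IsLocalRing R]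
    (X : Set (ModuleCat.{0} R)) (hX : ∀ M ∈ X, Module.Finite R M) :
    PrimeSpectrum.zeroLocus
        ((⨅ (i : ℕ) (_ : 0 < i) (M : ModuleCat.{0} R) (_ : M ∈ X)
            (L : ModuleCat.{0} R) (_ : IsFiniteLength R L),
            Module.annihilator R (ExtMod R i M L) : Ideal R) : Set R) =
      PrimeSpectrum.zeroLocus
        ((⨅ (i : ℕ) (_ : 0 < i) (M : ModuleCat.{0} R) (_ : M ∈ X)
            (N : ModuleCat.{0} R) (_ : Module.Finite R N),
            Module.annihilator R (ExtMod R i M N) : Ideal R) : Set R) :=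
  congrArg (fun I : Ideal R => PrimeSpectrum.zeroLocus (I : Set R)) (stmt11_general X hX)

end
end

section
/- Let R be a commutative noetherian local ring. Let X and Y be classes of finitely generated R-modules, each containing all finite-length R-modules. Then V(⋂_{i>0, M ∈ X, N ∈ Y} Ann_R Ext_R^i(M,N)) = V(⋂_{i>0, M, N} Ann_R Ext_R^i(M,N)), where in the right-hand side M and N range over all finitely generated R-modules. In particular, the set V(⋂_{i>0, M ∈ X, N ∈ Y} Ann_R Ext_R^i(M,N)) is the same for all such pairs of classes X, Y. -/
open CategoryTheory IsLocalRing

noncomputable section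

/-!
Already the ideals are equal, over any noetherian ring: if `a` kills `Ext^i` between finite-length
modules, it kills `Ext^i(M, N)` for all finitely generated `M`, `N`. Let `m` be a maximal ideal.

* If `m ^ k N = 0`, then `Ext^i(M, N) → Ext^i(m ^ n M, N)` vanishes for large `n`, by
  Artin–Rees and dimension shifting in `M`. Hence `Ext^i(M / m ^ n M, N) → Ext^i(M, N)` is
  surjective, and `a` kills `Ext^i(M, N / m ^ k N)` for every `k` and finitely generated `N`.
* The image of `Ext^i(M, m ^ n N) → Ext^i(M, N)` lies in `m ^ t Ext^i(M, N)` for large `n`, again by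
  Artin–Rees and dimension shifting. So by the first point `a Ext^i(M, N) ⊆ m ^ t Ext^i(M, N)` for
  all `t`, and Krull's intersection theorem at all maximal ideals `m` gives `a Ext^i(M, N) = 0`.
-/

universe u v

section AdicTopology

variable {R : Type*} [CommRing R] (I : Ideal R)
  {M N : Type*} [AddCommGroup M] [Module R M] [AddCommGroup N] [Module R N]

theorem exists_comap_pow_smul_top_le [IsNoetherianRing R] [Module.Finite R N] {f : M →ₗ[R] N}
    (hf : Function.Injective f) (t : ℕ) :
    ∃ n, (I ^ n • ⊤ : Submodule R N).comap f ≤ I ^ t • ⊤ := by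
  obtain ⟨k, hk⟩ := I.exists_pow_inf_eq_pow_smul f.range
  refine ⟨t + k, ?_⟩
  rw [← Submodule.map_le_map_iff_of_injective hf, Submodule.map_comap_eq, inf_comm,
    hk _ (Nat.le_add_left k t), Nat.add_sub_cancel, Submodule.map_smul'', Submodule.map_top]
  exact Submodule.smul_mono le_rfl inf_le_right

theorem mem_smul_top_of_forall_apply_mem {ι : Type*} [Finite ι] {v : ι → N}
    (hv : ∀ j, v j ∈ (I • ⊤ : Submodule R N)) : v ∈ (I • ⊤ : Submodule R (ι → N)) := by
  classical
  cases nonempty_fintype ι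
  rw [← Finset.univ_sum_single v]
  exact Submodule.sum_mem _ fun j _ ↦
    Submodule.smul_top_le_comap_smul_top I (LinearMap.single R (fun _ ↦ N) j) (hv j)

theorem exists_mem_pow_smul_top_of_range_le [IsNoetherianRing R] [Module.Finite R M]
    [Module.Finite R N] (t : ℕ) :
    ∃ n, ∀ f : M →ₗ[R] N, f.range ≤ I ^ n • ⊤ → f ∈ (I ^ t • ⊤ : Submodule R (M →ₗ[R] N)) := by
  obtain ⟨s, hs⟩ := Module.Finite.fg_top (R := R) (M := M)
  let eval : (M →ₗ[R] N) →ₗ[R] (s → N) := LinearMap.pi fun x ↦ LinearMap.applyₗ x.1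
  have eval_injective : Function.Injective eval := fun f g hfg ↦
    LinearMap.ext_on hs fun x hx ↦ congrFun hfg ⟨x, hx⟩
  obtain ⟨n, hn⟩ := exists_comap_pow_smul_top_le I eval_injective t
  exact ⟨n, fun f hf ↦ hn <| mem_smul_top_of_forall_apply_mem _ fun x ↦ hf ⟨x, rfl⟩⟩

theorem eq_zero_of_forall_isMaximal_mem_pow_smul_top [IsNoetherianRing R] [Module.Finite R M]
    {x : M} (hx : ∀ m : Ideal R, m.IsMaximal → ∀ t : ℕ, x ∈ (m ^ t • ⊤ : Submodule R M)) :
    x = 0 := by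
  rw [← Ideal.torsionOf_eq_top_iff R]
  by_contra hne
  obtain ⟨m, hm, hle⟩ := Ideal.exists_le_maximal _ hne
  obtain ⟨⟨r, hr⟩, hrx⟩ :=
    (m.mem_iInf_smul_pow_eq_bot_iff x).mp (Submodule.mem_iInf _ |>.mpr (hx m hm))
  have h1r : 1 - r ∈ m := hle <| by simp [Ideal.mem_torsionOf_iff, sub_smul, hrx]
  exact m.ne_top_iff_one.mp hm.ne_top <| by simpa using m.add_mem h1r hr

theorem isArtinianRing_quotient_pow_of_isMaximal [IsNoetherianRing R] (m : Ideal R) [m.IsMaximal]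
    (n : ℕ) : IsArtinianRing (R ⧸ m ^ n) := by
  have krullDimLE : Ring.KrullDimLE 0 (R ⧸ m ^ n) := by
    rw [Ideal.krullDimLE_zero_quotient_iff_forall_minimalPrimes_isMaximal]
    rintro p ⟨⟨hp, hle⟩, -⟩
    rwa [← Ideal.IsMaximal.eq_of_le ‹_› hp.ne_top (hp.le_of_pow_le hle)]
  exact isArtinianRing_iff_isNoetherianRing_krullDimLE_zero.mpr ⟨inferInstance, krullDimLE⟩

theorem isFiniteLength_quotient_pow_smul_top [IsNoetherianRing R] (m : Ideal R) [m.IsMaximal]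
    [Module.Finite R M] (n : ℕ) :
    IsFiniteLength R (M ⧸ (m ^ n • ⊤ : Submodule R M)) := by
  have := isArtinianRing_quotient_pow_of_isMaximal m n
  have : Module.Finite (R ⧸ m ^ n) (M ⧸ (m ^ n • ⊤ : Submodule R M)) :=
    .of_restrictScalars_finite R _ _
  exact isFiniteLength_iff_isNoetherian_isArtinian.mpr ⟨inferInstance,
    isArtinian_of_surjective_algebraMap (R := R ⧸ m ^ n) Ideal.Quotient.mk_surjective⟩

end AdicTopology

section DerivedExt

variable {R : Type*} [CommRing R] {C : Type*} [Category* C] [Abelian C] [Linear R C]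
  {X : C} (P : ProjectiveResolution X) {Y : C} {a : R} {n : ℕ}

theorem mem_annihilator_abelianExt_succ_iff [HasExt.{v} C] :
    a ∈ Module.annihilator R (Abelian.Ext.{v} X Y (n + 1)) ↔
      ∀ f : P.complex.X (n + 1) ⟶ Y, P.complex.d (n + 2) (n + 1) ≫ f = 0 →
        ∃ g : P.complex.X n ⟶ Y, P.complex.d (n + 1) n ≫ g = a • f := by
  have smul_extMk (f : P.complex.X (n + 1) ⟶ Y) (hf : P.complex.d (n + 2) (n + 1) ≫ f = 0) :
      a • P.extMk f (n + 2) rfl hf = 0 ↔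
        ∃ g : P.complex.X n ⟶ Y, P.complex.d (n + 1) n ≫ g = a • f := by
    rw [Abelian.Ext.smul_eq_comp_mk₀, P.extMk_comp_mk₀, P.extMk_eq_zero_iff _ _ _ _ n rfl,
      Linear.comp_smul, Category.comp_id]
  rw [Module.mem_annihilator]
  refine ⟨fun h f hf ↦ (smul_extMk f hf).mp (h _), fun h e ↦ ?_⟩
  obtain ⟨f, hf, rfl⟩ := P.extMk_surjective e (n + 2) rfl
  exact (smul_extMk f hf).mpr (h f hf)

theorem mem_annihilator_derivedExt_succ_iff [EnoughProjectives C] :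
    a ∈ Module.annihilator R (((Ext R C (n + 1)).obj (.op X)).obj Y) ↔
      ∀ f : P.complex.X (n + 1) ⟶ Y, P.complex.d (n + 2) (n + 1) ≫ f = 0 →
        ∃ g : P.complex.X n ⟶ Y, P.complex.d (n + 1) n ≫ g = a • f := by
  let K := P.complex.linearYonedaObj R Y
  let S := K.sc' n (n + 1) (n + 2)
  let isoCohomology : ((Ext R C (n + 1)).obj (.op X)).obj Y ≅ S.moduleCatLeftHomologyData.H :=
    P.isoExt (n + 1) Y ≪≫
      ShortComplex.homologyMapIso (K.isoSc' n (n + 1) (n + 2) (by simp) (by simp)) ≪≫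
      S.moduleCatHomologyIso
  have smul_mk (f : S.g.hom.ker) :
      a • (Submodule.Quotient.mk f : S.g.hom.ker ⧸ S.moduleCatToCycles.range) = 0 ↔
        ∃ g : P.complex.X n ⟶ Y, P.complex.d (n + 1) n ≫ g = a • f.1 := by
    rw [← Submodule.Quotient.mk_smul, Submodule.Quotient.mk_eq_zero]
    exact exists_congr fun g ↦ Subtype.ext_iff
  rw [isoCohomology.toLinearEquiv.annihilator_eq, Module.mem_annihilator]
  exact (Submodule.Quotient.mk_surjective S.moduleCatToCycles.range).forall.trans <|
    (forall_congr' smul_mk).trans Subtype.forall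

theorem annihilator_derivedExt_succ [EnoughProjectives C] [HasExt.{v} C] (X Y : C) (n : ℕ) :
    Module.annihilator R (((Ext R C (n + 1)).obj (.op X)).obj Y) =
      Module.annihilator R (Abelian.Ext.{v} X Y (n + 1)) :=
  Ideal.ext fun _ ↦ (mem_annihilator_derivedExt_succ_iff (projectiveResolution X)).trans
    (mem_annihilator_abelianExt_succ_iff (projectiveResolution X)).symm

end DerivedExt

section ModuleExt

theorem mk₀_τ₃_comp_extClass_comp {C : Type*} [Category* C] [Abelian C] [HasExt.{v} C]
    {S S' : ShortComplex C} (hS : S.ShortExact) (hS' : S'.ShortExact) (φ : S' ⟶ S) {Y : C} {i : ℕ}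
    (e : Abelian.Ext.{v} S.X₁ Y i) :
    (Abelian.Ext.mk₀ φ.τ₃).comp (hS.extClass.comp e (add_comm 1 i)) (zero_add (i + 1)) =
      hS'.extClass.comp ((Abelian.Ext.mk₀ φ.τ₁).comp e (zero_add i)) (add_comm 1 i) := by
  rw [← Abelian.Ext.comp_assoc (h₁₂ := zero_add 1) (h := by lia), ← hS'.extClass_naturality hS φ,
    Abelian.Ext.comp_assoc (h₂₃ := zero_add i) (h := by lia)]

variable {R : Type u} [CommRing R]

theorem shortExact_subtype_mkQ {M : ModuleCat.{v} R} (A : Submodule R M) :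
    (ModuleCat.shortComplexOfCompEqZero A.subtype A.mkQ
      (LinearMap.exact_subtype_mkQ A).linearMap_comp_eq_zero).ShortExact :=
  ModuleCat.shortComplex_shortExact _ (LinearMap.exact_subtype_mkQ A) A.injective_subtype
    A.mkQ_surjective

variable [Small.{v} R]

theorem mk₀_subtype_comp_extClass_comp_eq_zero {F M : Type v} [AddCommGroup F] [Module R F]
    [AddCommGroup M] [Module R M] {g : F →ₗ[R] M} (hg : Function.Surjective g)
    {B : Submodule R F} {A : Submodule R g.ker} (hBA : B.comap g.ker.subtype ≤ A)
    {N : ModuleCat.{v} R} {i : ℕ} {e : Abelian.Ext.{v} (ModuleCat.of R g.ker) N i}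
    (he : (Abelian.Ext.mk₀ (ModuleCat.ofHom A.subtype)).comp e (zero_add i) = 0) :
    (Abelian.Ext.mk₀ (ModuleCat.ofHom (B.map g).subtype)).comp
      ((LinearMap.shortExact_shortComplexKer hg).extClass.comp e (add_comm 1 i))
      (zero_add (i + 1)) = 0 := by
  -- Over `B.map g`, the extension `0 → ker g → F → M → 0` comes from one by `ker g ∩ B`.
  let g' : B →ₗ[R] B.map g := g.submoduleMap B
  have hg' : Function.Surjective g' := g.submoduleMap_surjective B
  let kerInclusion : g'.ker →ₗ[R] g.ker :=
    (B.subtype ∘ₗ g'.ker.subtype).codRestrict g.ker fun x ↦ congrArg Subtype.val x.2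
  let toA : g'.ker →ₗ[R] A := kerInclusion.codRestrict A fun x ↦ hBA x.1.2
  let φ : g'.shortComplexKer ⟶ g.shortComplexKer :=
    { τ₁ := ModuleCat.ofHom toA ≫ ModuleCat.ofHom A.subtype
      τ₂ := ModuleCat.ofHom B.subtype
      τ₃ := ModuleCat.ofHom (B.map g).subtype }
  have restrict_eq_zero : (Abelian.Ext.mk₀ φ.τ₁).comp e (zero_add i) = 0 := by
    rw [← Abelian.Ext.mk₀_comp_mk₀, Abelian.Ext.comp_assoc_of_second_deg_zero, he,
      Abelian.Ext.comp_zero]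
  calc
    _ = (LinearMap.shortExact_shortComplexKer hg').extClass.comp
          ((Abelian.Ext.mk₀ φ.τ₁).comp e (zero_add i)) (add_comm 1 i) :=
      mk₀_τ₃_comp_extClass_comp _ _ φ e
    _ = 0 := by rw [restrict_eq_zero, Abelian.Ext.comp_zero]

variable [IsNoetherianRing R] (I : Ideal R)

theorem exists_mk₀_subtype_comp_eq_zero {N : ModuleCat.{v} R} {k : ℕ}
    (hN : (I ^ k • ⊤ : Submodule R N) = ⊥) (M : ModuleCat.{v} R) [Module.Finite R M] (i : ℕ) :
    ∃ n, ∀ e : Abelian.Ext.{v} M N i,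
      (Abelian.Ext.mk₀ (ModuleCat.ofHom (I ^ n • ⊤ : Submodule R M).subtype)).comp e
        (zero_add i) = 0 := by
  induction i generalizing M with
  | zero =>
    refine ⟨k, fun e ↦ ?_⟩
    obtain ⟨f, rfl⟩ := (Abelian.Ext.linearEquiv₀ (R := R)).symm.surjective e
    have restrict_eq_zero :
        (ModuleCat.ofHom (I ^ k • ⊤ : Submodule R M).subtype : _ ⟶ M) ≫ f = 0 := by
      ext x
      simpa [hN] using Submodule.smul_top_le_comap_smul_top (I ^ k) f.hom x.2
    rw [Abelian.Ext.linearEquiv₀_symm_apply]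
    exact (Abelian.Ext.mk₀_comp_mk₀ _ _).trans
      ((congrArg _ restrict_eq_zero).trans (Abelian.Ext.mk₀_zero _ _))
  | succ i ih =>
    obtain ⟨F, _, _, _, _, g, hg⟩ := Module.exists_finite_presentation R M
    obtain ⟨t, ht⟩ := ih (ModuleCat.of R g.ker)
    obtain ⟨n, hn⟩ := exists_comap_pow_smul_top_le I g.ker.injective_subtype t
    have map_eq : (I ^ n • ⊤ : Submodule R F).map g = I ^ n • ⊤ := by
      rw [Submodule.map_smul'', Submodule.map_top, LinearMap.range_eq_top.mpr hg]
    refine ⟨n, fun e ↦ ?_⟩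
    obtain ⟨e, rfl⟩ := precomp_extClass_surjective_of_projective_X₂ N
      (LinearMap.shortExact_shortComplexKer hg) i e
    rw [← map_eq]
    exact mk₀_subtype_comp_extClass_comp_eq_zero hg hn (ht e)

theorem exists_comp_mk₀_subtype_mem_pow_smul_top (M N : ModuleCat.{v} R)
    [Module.Finite R M] [Module.Finite R N] (i t : ℕ) :
    ∃ n, ∀ e : Abelian.Ext.{v} M (ModuleCat.of R (I ^ n • ⊤ : Submodule R N)) i,
      e.comp (Abelian.Ext.mk₀ (ModuleCat.ofHom (I ^ n • ⊤ : Submodule R N).subtype))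
        (add_zero i) ∈ (I ^ t • ⊤ : Submodule R (Abelian.Ext.{v} M N i)) := by
  induction i generalizing M with
  | zero =>
    obtain ⟨n, hn⟩ := exists_mem_pow_smul_top_of_range_le I (M := M) (N := N) t
    refine ⟨n, fun e ↦ ?_⟩
    obtain ⟨f, rfl⟩ := (Abelian.Ext.linearEquiv₀ (R := R)).symm.surjective e
    let inclusion := (I ^ n • ⊤ : Submodule R N).subtype
    have range_le : (inclusion ∘ₗ f.hom).range ≤ I ^ n • ⊤ :=
      (LinearMap.range_comp_le_range _ _).trans (Submodule.range_subtype _).le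
    let homToExt : (M →ₗ[R] N) →ₗ[R] Abelian.Ext.{v} M N 0 :=
      (ModuleCat.homLinearEquiv.symm.trans Abelian.Ext.linearEquiv₀.symm).toLinearMap
    rw [Abelian.Ext.linearEquiv₀_symm_apply, Abelian.Ext.mk₀_comp_mk₀]
    exact Submodule.smul_top_le_comap_smul_top (I ^ t) homToExt (hn _ range_le)
  | succ i ih =>
    obtain ⟨F, _, _, _, _, g, hg⟩ := Module.exists_finite_presentation R M
    have hS := LinearMap.shortExact_shortComplexKer hg
    obtain ⟨n, hn⟩ := ih (ModuleCat.of R g.ker)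
    refine ⟨n, fun e ↦ ?_⟩
    obtain ⟨e, rfl⟩ := precomp_extClass_surjective_of_projective_X₂ _ hS i e
    have := Submodule.smul_top_le_comap_smul_top (I ^ t)
      (hS.extClass.precompOfLinear R N (add_comm 1 i)) (hn e)
    simpa using this

theorem mem_annihilator_ext_of_forall_quotient_left {M N : ModuleCat.{v} R} [Module.Finite R M]
    {k : ℕ} (hN : (I ^ k • ⊤ : Submodule R N) = ⊥) {a : R} {i : ℕ}
    (ha : ∀ n : ℕ, a ∈ Module.annihilator R
      (Abelian.Ext.{v} (ModuleCat.of R (M ⧸ (I ^ n • ⊤ : Submodule R M))) N i)) :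
    a ∈ Module.annihilator R (Abelian.Ext.{v} M N i) := by
  rw [Module.mem_annihilator]
  intro e
  obtain ⟨n, hn⟩ := exists_mk₀_subtype_comp_eq_zero I hN M i
  obtain ⟨e', rfl⟩ :=
    Abelian.Ext.contravariant_sequence_exact₂ (shortExact_subtype_mkQ _) N e (hn e)
  rw [← Abelian.Ext.comp_smul, Module.mem_annihilator.mp (ha n), Abelian.Ext.comp_zero]

theorem smul_ext_mem_pow_smul_top_of_forall_quotient_right {M N : ModuleCat.{v} R}
    [Module.Finite R M] [Module.Finite R N] {a : R} {i : ℕ}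
    (ha : ∀ n : ℕ, a ∈ Module.annihilator R
      (Abelian.Ext.{v} M (ModuleCat.of R (N ⧸ (I ^ n • ⊤ : Submodule R N))) i))
    (e : Abelian.Ext.{v} M N i) (t : ℕ) :
    a • e ∈ (I ^ t • ⊤ : Submodule R (Abelian.Ext.{v} M N i)) := by
  obtain ⟨n, hn⟩ := exists_comp_mk₀_subtype_mem_pow_smul_top I M N i t
  obtain ⟨e', he'⟩ := Abelian.Ext.covariant_sequence_exact₂ M
    (shortExact_subtype_mkQ (I ^ n • ⊤ : Submodule R N)) (a • e)
    ((Abelian.Ext.smul_comp ..).trans (Module.mem_annihilator.mp (ha n) _))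
  exact he' ▸ hn e'

theorem mem_annihilator_ext_of_forall_isFiniteLength {a : R} {i : ℕ}
    (ha : ∀ M N : ModuleCat.{v} R, IsFiniteLength R M → IsFiniteLength R N →
      a ∈ Module.annihilator R (Abelian.Ext.{v} M N i))
    (M N : ModuleCat.{v} R) [Module.Finite R M] [Module.Finite R N] :
    a ∈ Module.annihilator R (Abelian.Ext.{v} M N i) := by
  rw [Module.mem_annihilator]
  refine fun e ↦ eq_zero_of_forall_isMaximal_mem_pow_smul_top fun m hm ↦
    smul_ext_mem_pow_smul_top_of_forall_quotient_right m (fun k ↦ ?_) e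
  refine mem_annihilator_ext_of_forall_quotient_left m (k := k) ?_ fun n ↦
    ha _ _ (isFiniteLength_quotient_pow_smul_top m n) (isFiniteLength_quotient_pow_smul_top m k)
  rw [← Submodule.range_mkQ, ← Submodule.map_top, ← Submodule.map_smul'', Submodule.mkQ_map_self]

end ModuleExt

theorem stmt13_general {R : Type u} [CommRing R] [IsNoetherianRing R] [Small.{v} R]
    {X Y : Set (ModuleCat.{v} R)}
    (hXfin : ∀ M ∈ X, Module.Finite R M) (hYfin : ∀ M ∈ Y, Module.Finite R M)
    (hXfl : ∀ M : ModuleCat.{v} R, IsFiniteLength R M → M ∈ X)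
    (hYfl : ∀ M : ModuleCat.{v} R, IsFiniteLength R M → M ∈ Y) :
    (⨅ (i : ℕ) (_ : 0 < i) (M : ModuleCat.{v} R) (_ : M ∈ X) (N : ModuleCat.{v} R) (_ : N ∈ Y),
        Module.annihilator R (((Ext R (ModuleCat.{v} R) i).obj (.op M)).obj N)) =
      ⨅ (i : ℕ) (_ : 0 < i) (M : ModuleCat.{v} R) (_ : Module.Finite R M)
        (N : ModuleCat.{v} R) (_ : Module.Finite R N),
        Module.annihilator R (((Ext R (ModuleCat.{v} R) i).obj (.op M)).obj N) := by
  refine le_antisymm (fun a ha ↦ ?_) (fun a ha ↦ ?_) <;> simp only [Submodule.mem_iInf] at ha ⊢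
  · intro i hi M hM N hN
    obtain ⟨n, rfl⟩ := Nat.exists_eq_add_one_of_ne_zero hi.ne'
    rw [annihilator_derivedExt_succ]
    refine mem_annihilator_ext_of_forall_isFiniteLength (fun M' N' hM' hN' ↦ ?_) M N
    rw [← annihilator_derivedExt_succ]
    exact ha (n + 1) hi M' (hXfl M' hM') N' (hYfl N' hN')
  · exact fun i hi M hM N hN ↦ ha i hi M (hXfin M hM) N (hYfin N hN)

/-- Let `R` be a noetherian local ring and let `X`, `Y` be classes of
finitely generated `R`-modules, each containing all finite-length modules. Then
`V(⋂_{i>0, M ∈ X, N ∈ Y} Ann Ext^i(M,N)) = V(⋂_{i>0, M, N f.g.} Ann Ext^i(M,N))`. -/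
theorem stmt13 (R : Type) [CommRing R] [IsNoetherianRing R] [IsLocalRing R]
    (X Y : Set (ModuleCat.{0} R))
    (hXfin : ∀ M ∈ X, Module.Finite R M) (hYfin : ∀ M ∈ Y, Module.Finite R M)
    (hXfl : ∀ M : ModuleCat.{0} R, IsFiniteLength R M → M ∈ X)
    (hYfl : ∀ M : ModuleCat.{0} R, IsFiniteLength R M → M ∈ Y) :
    PrimeSpectrum.zeroLocus
        ((⨅ (i : ℕ) (_ : 0 < i) (M : ModuleCat.{0} R) (_ : M ∈ X)
            (N : ModuleCat.{0} R) (_ : N ∈ Y),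
            Module.annihilator R (ExtMod R i M N) : Ideal R) : Set R) =
      PrimeSpectrum.zeroLocus
        ((⨅ (i : ℕ) (_ : 0 < i) (M : ModuleCat.{0} R) (_ : Module.Finite R M)
            (N : ModuleCat.{0} R) (_ : Module.Finite R N),
            Module.annihilator R (ExtMod R i M N) : Ideal R) : Set R) :=
  congrArg (fun I : Ideal R ↦ PrimeSpectrum.zeroLocus (I : Set R))
    (stmt13_general hXfin hYfin hXfl hYfl)

end
end

section
/- Let R be a commutative noetherian ring and M a finitely generated R-module. Then the following three subsets of Spec R coincide: (i) the nonfree locus NF(M), i.e., the set of prime ideals p such that M_p is not a free R_p-module; (ii) the union over all integers i > 0 and all finitely generated R-modules N of the supports of Tor_i^R(M,N); (iii) V(⋂_{i>0, N} Ann_R Tor_i^R(M,N)), the set of prime ideals containing the intersection of the annihilators of Tor_i^R(M,N) over all i > 0 and all finitely generated R-modules N. -/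
open CategoryTheory IsLocalRing

noncomputable section

/-!
For a projective resolution `P` of `N`, the module `Tor_{n+1}(M, N)` is the kernel of
`M ⊗ im d_{n+1} → M ⊗ P_n`. If `M_p` is free, then `r • id_M` factors through some `R^n` with
`r ∉ p`. Tensoring with `R^n` preserves injections, so `r` kills all these kernels, that is, all
higher Tor modules at once, and `p` does not contain the intersection of their annihilators.

Conversely, by the homotopy behind the Schanuel lemma, `ker (M ⊗ I → M)` embeds into
`Tor_1(M, R ⧸ I)`. If `p` lies in none of the supports of the latter, then `M_p` is flat by the
ideal criterion, and a finitely generated flat module over a local ring is free.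
-/

open TensorProduct

section LTensorKernel

variable {R M A B C : Type*} [CommRing R] [AddCommGroup M] [Module R M] [AddCommGroup A]
  [Module R A] [AddCommGroup B] [Module R B] [AddCommGroup C] [Module R C]

variable (M) in
/-- The homology at `M ⊗ B` of `M ⊗ A → M ⊗ B → M ⊗ C`, for `A → B → C` exact, as the kernel of
`M ⊗ im g → M ⊗ C`. It removes the higher terms of a resolution from the description of Tor. -/
def lTensorHomologyEquivKer {f : A →ₗ[R] B} {g : B →ₗ[R] C} (hfg : Function.Exact f g) :
    (LinearMap.ker (g.lTensor M) ⧸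
        (LinearMap.range (f.lTensor M)).submoduleOf (LinearMap.ker (g.lTensor M))) ≃ₗ[R]
      LinearMap.ker ((LinearMap.range g).subtype.lTensor M) :=
  have comp_eq (z : M ⊗[R] B) :
      (LinearMap.range g).subtype.lTensor M (g.rangeRestrict.lTensor M z) = g.lTensor M z := by
    rw [← LinearMap.lTensor_comp_apply, LinearMap.subtype_comp_codRestrict]
  let φ : LinearMap.ker (g.lTensor M) →ₗ[R]
      LinearMap.ker ((LinearMap.range g).subtype.lTensor M) :=
    (g.rangeRestrict.lTensor M).restrict fun z hz ↦ (comp_eq z).trans hz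
  have hφ : Function.Surjective φ := by
    rintro ⟨y, hy⟩
    obtain ⟨z, rfl⟩ := LinearMap.lTensor_surjective M g.surjective_rangeRestrict y
    exact ⟨⟨z, (comp_eq z).symm.trans hy⟩, rfl⟩
  have hker : (LinearMap.range (f.lTensor M)).submoduleOf (LinearMap.ker (g.lTensor M)) =
      LinearMap.ker φ := by
    have hexact : Function.Exact (f.lTensor M) (g.rangeRestrict.lTensor M) :=
      lTensor_exact M (fun y ↦ by simpa [Subtype.ext_iff] using hfg y) g.surjective_rangeRestrict
    ext z
    exact (hexact z.1).symm.trans (Subtype.ext_iff (a1 := φ z) (a2 := 0)).symm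
  (Submodule.quotEquivOfEq _ _ hker).trans (φ.quotKerEquivOfSurjective hφ)

theorem smul_eq_zero_of_lTensor_eq_zero_of_comp_eq_smul_id {F : Type*} [AddCommGroup F]
    [Module R F] [Module.Flat R F] {a : M →ₗ[R] F} {b : F →ₗ[R] M} {r : R}
    (hba : b ∘ₗ a = r • LinearMap.id) {j : A →ₗ[R] B} (hj : Function.Injective j)
    {x : M ⊗[R] A} (hx : j.lTensor M x = 0) : r • x = 0 := by
  have hax : a.rTensor A x = 0 := by
    apply Module.Flat.lTensor_preserves_injective_linearMap (M := F) j hj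
    rw [← LinearMap.comp_apply, LinearMap.lTensor_comp_rTensor, ← LinearMap.rTensor_comp_lTensor,
      LinearMap.comp_apply, hx, map_zero, map_zero]
  calc r • x = (b ∘ₗ a).rTensor A x := by
        rw [hba, LinearMap.rTensor_smul, LinearMap.rTensor_id, LinearMap.smul_apply,
          LinearMap.id_apply]
    _ = 0 := by rw [LinearMap.rTensor_comp_apply, hax, map_zero]

/-- The map `ker f → ker g` induced by a map `u` over `C`; applied to lifts between two projective
presentations of the same module, it compares their first syzygies. -/
def kerMapOfComp {f : A →ₗ[R] C} {g : B →ₗ[R] C} {u : A →ₗ[R] B} (hu : g ∘ₗ u = f) :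
    LinearMap.ker f →ₗ[R] LinearMap.ker g :=
  u.restrict fun x hx ↦ by rwa [LinearMap.mem_ker, ← LinearMap.comp_apply, hu]

theorem eq_zero_of_lTensor_kerMapOfComp_eq_zero {f : A →ₗ[R] C} {g : B →ₗ[R] C} {u : A →ₗ[R] B}
    {v : B →ₗ[R] A} (hu : g ∘ₗ u = f) (hv : f ∘ₗ v = g) {x : M ⊗[R] LinearMap.ker f}
    (hx : (LinearMap.ker f).subtype.lTensor M x = 0) (hux : (kerMapOfComp hu).lTensor M x = 0) :
    x = 0 := by
  let h : A →ₗ[R] LinearMap.ker f := (LinearMap.id - v ∘ₗ u).codRestrict _ fun a ↦ by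
    rw [LinearMap.mem_ker, ← LinearMap.comp_apply, LinearMap.comp_sub, ← LinearMap.comp_assoc, hv,
      hu, LinearMap.comp_id, sub_self, LinearMap.zero_apply]
  have id_eq : h ∘ₗ (LinearMap.ker f).subtype + kerMapOfComp hv ∘ₗ kerMapOfComp hu =
      LinearMap.id := by
    ext a
    simp [h, kerMapOfComp]
  calc x = (h ∘ₗ (LinearMap.ker f).subtype + kerMapOfComp hv ∘ₗ kerMapOfComp hu).lTensor M x := by
        rw [id_eq, LinearMap.lTensor_id, LinearMap.id_apply]
    _ = 0 := by
        rw [LinearMap.lTensor_add, LinearMap.add_apply, LinearMap.lTensor_comp_apply,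
          LinearMap.lTensor_comp_apply, hx, hux, map_zero, map_zero, add_zero]

theorem exists_injective_ker_lTensor_subtype_ker {f : A →ₗ[R] C} {g : B →ₗ[R] C}
    [Module.Projective R A] [Module.Projective R B] (hf : Function.Surjective f)
    (hg : Function.Surjective g) :
    ∃ φ : LinearMap.ker ((LinearMap.ker f).subtype.lTensor M) →ₗ[R]
      LinearMap.ker ((LinearMap.ker g).subtype.lTensor M), Function.Injective φ := by
  obtain ⟨u, hu⟩ := Module.projective_lifting_property g f hg
  obtain ⟨v, hv⟩ := Module.projective_lifting_property f g hf
  have comm : (LinearMap.ker g).subtype ∘ₗ kerMapOfComp hu = u ∘ₗ (LinearMap.ker f).subtype := rfl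
  refine ⟨((kerMapOfComp hu).lTensor M).restrict fun x hx ↦ ?_, ?_⟩
  · rw [LinearMap.mem_ker, ← LinearMap.lTensor_comp_apply, comm, LinearMap.lTensor_comp_apply,
      LinearMap.mem_ker.mp hx, map_zero]
  · rw [injective_iff_map_eq_zero]
    rintro ⟨x, hx⟩ hux
    exact Subtype.ext (eq_zero_of_lTensor_kerMapOfComp_eq_zero hu hv hx (congrArg Subtype.val hux))

end LTensorKernel

section Tor

universe u

variable {R : Type u} [CommRing R] (M : ModuleCat.{u} R) {N : ModuleCat.{u} R}

/-- `Tor_{n+1}(M, N)` as the kernel of `M ⊗ im d → M ⊗ P_n`, where `d : P_{n+1} → P_n` is the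
differential of a projective resolution of `N`. The syzygy is encoded as `im d` rather than as the
kernel of the next differential, so that `n = 0` is not a separate case. -/
def torSuccEquivKer (P : ProjectiveResolution N) (n : ℕ) :
    ((Tor (ModuleCat.{u} R) (n + 1)).obj M).obj N ≃ₗ[R]
      LinearMap.ker ((LinearMap.range (P.complex.d (n + 1) n).hom).subtype.lTensor M) :=
  let F := (MonoidalCategory.tensoringLeft (ModuleCat.{u} R)).obj M
  let K := (F.mapHomologicalComplex (ComplexShape.down ℕ)).obj P.complex
  let S := K.sc' (n + 2) (n + 1) n
  have hexact : Function.Exact (P.complex.d (n + 2) (n + 1)).hom (P.complex.d (n + 1) n).hom :=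
    (ShortComplex.ShortExact.moduleCat_exact_iff_function_exact _).1 (P.exact_succ n)
  let e : ((Tor (ModuleCat.{u} R) (n + 1)).obj M).obj N ≅ S.moduleCatLeftHomologyData.H :=
    P.isoLeftDerivedObj F (n + 1) ≪≫
      ShortComplex.homologyMapIso (K.isoSc' (n + 2) (n + 1) n (by simp) (by simp)) ≪≫
      S.moduleCatHomologyIso
  e.toLinearEquiv ≪≫ₗ
    Submodule.quotEquivOfEq _ _ (LinearMap.range_codRestrict _ _ _) ≪≫ₗ
    lTensorHomologyEquivKer M hexact

variable {M}

theorem mem_annihilator_tor_succ_of_comp_eq_smul_id {F : Type*} [AddCommGroup F] [Module R F]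
    [Module.Flat R F] {a : M →ₗ[R] F} {b : F →ₗ[R] M} {r : R} (hba : b ∘ₗ a = r • LinearMap.id)
    (N : ModuleCat.{u} R) (n : ℕ) :
    r ∈ Module.annihilator R (((Tor (ModuleCat.{u} R) (n + 1)).obj M).obj N) := by
  rw [(torSuccEquivKer M (projectiveResolution N) n).annihilator_eq, Module.mem_annihilator]
  rintro ⟨x, hx⟩
  exact Subtype.ext (smul_eq_zero_of_lTensor_eq_zero_of_comp_eq_smul_id hba
    (Submodule.subtype_injective _) hx)

variable (M) in
theorem support_ker_lTensor_subtype_ker_subset_support_tor_one {A : Type*} [AddCommGroup A]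
    [Module R A] [Module.Projective R A] {f : A →ₗ[R] N} (hf : Function.Surjective f) :
    Module.support R (LinearMap.ker ((LinearMap.ker f).subtype.lTensor M)) ⊆
      Module.support R (((Tor (ModuleCat.{u} R) 1).obj M).obj N) := by
  let P := projectiveResolution N
  have hπ : Function.Surjective (P.π.f 0).hom :=
    (ModuleCat.epi_iff_surjective (P.π.f 0)).1 inferInstance
  have hexact : Function.Exact (P.complex.d 1 0).hom (P.π.f 0).hom :=
    (ShortComplex.ShortExact.moduleCat_exact_iff_function_exact _).1 P.exact₀
  obtain ⟨φ, hφ⟩ := exists_injective_ker_lTensor_subtype_ker (M := M) hf hπ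
  rw [(torSuccEquivKer M P 0).support_eq, ← hexact.linearMap_ker_eq]
  exact Module.support_subset_of_injective φ hφ

end Tor

section Localization

variable {R M : Type*} [CommRing R] [AddCommGroup M] [Module R M] (S : Submonoid R)

theorem flat_localizedModule_of_subsingleton_localizedModule_ker_lTensor
    (h : ∀ ⦃I : Ideal R⦄, I.FG →
      Subsingleton (LocalizedModule S (LinearMap.ker (I.subtype.lTensor M)))) :
    Module.Flat (Localization S) (LocalizedModule S M) := by
  rw [Module.flat_iff_of_isLocalization (R := R) (Localization S) S,
    Module.Flat.iff_lTensor_injective]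
  intro I hI
  let ι := LocalizedModule.mkLinearMap S M
  have : IsLocalizedModule S (ι.rTensor I) := IsLocalizedModule.rTensor R S ι
  have : IsLocalizedModule S (ι.rTensor R) := IsLocalizedModule.rTensor R S ι
  refine IsLocalizedModule.injective_of_map_zero S (ι.rTensor I) fun x hx ↦ ?_
  have hιx : ι.rTensor R (I.subtype.lTensor M x) = 0 := by
    rwa [← LinearMap.comp_apply, LinearMap.rTensor_comp_lTensor, ← LinearMap.lTensor_comp_rTensor]
  obtain ⟨s, hs⟩ := (IsLocalizedModule.eq_zero_iff S (ι.rTensor R)).1 hιx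
  have hsx : s.1 • x ∈ LinearMap.ker (I.subtype.lTensor M) := by
    rwa [LinearMap.mem_ker, map_smul]
  obtain ⟨t, ht, htsx⟩ := LocalizedModule.subsingleton_iff.1 (h hI) ⟨s.1 • x, hsx⟩
  refine (IsLocalizedModule.eq_zero_iff S (ι.rTensor I)).2 ⟨⟨t, ht⟩ * s, ?_⟩
  rw [mul_smul]
  exact congrArg Subtype.val htsx

theorem exists_comp_eq_smul_id_of_projective_localizedModule [Module.FinitePresentation R M]
    [Module.Projective (Localization S) (LocalizedModule S M)] :
    ∃ (n : ℕ) (a : M →ₗ[R] (Fin n → R)) (b : (Fin n → R) →ₗ[R] M), ∃ r ∈ S,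
      b ∘ₗ a = r • LinearMap.id := by
  obtain ⟨n, b, hb⟩ := Module.Finite.exists_fin' R M
  obtain ⟨σ, hσ⟩ := Module.projective_lifting_property (LocalizedModule.map S b) LinearMap.id
    (LocalizedModule.map_surjective S b hb)
  obtain ⟨⟨a, s⟩, ha⟩ := IsLocalizedModule.surj S (LocalizedModule.map S) σ
  have hba : LocalizedModule.map S (b ∘ₗ a) = LocalizedModule.map S (s • LinearMap.id) := by
    calc LocalizedModule.map S (b ∘ₗ a) = LocalizedModule.map S b ∘ₗ LocalizedModule.map S a := by
          ext x
          induction x using LocalizedModule.induction_on with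
          | h x t => simp
      _ = s • LinearMap.id := by rw [← ha, LinearMap.comp_smul, hσ]
      _ = LocalizedModule.map S (s • LinearMap.id) := by
          rw [S.smul_def, S.smul_def, map_smul, LocalizedModule.map_id]
  obtain ⟨t, ht⟩ := IsLocalizedModule.exists_of_eq (S := S) (f := LocalizedModule.map S) hba
  refine ⟨n, t.1 • a, b, t.1 * s.1, (t * s).2, ?_⟩
  rw [LinearMap.comp_smul, mul_smul]
  exact ht

end Localization

section Stalk

universe u

variable {R : Type u} [CommRing R] {M : ModuleCat.{u} R} {p : PrimeSpectrum R}

theorem exists_notMem_forall_mem_annihilator_tor_succ_of_projective [Module.FinitePresentation R M]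
    (hp : Module.Projective (Localization.AtPrime p.asIdeal)
      (LocalizedModule p.asIdeal.primeCompl M)) :
    ∃ r ∉ p.asIdeal, ∀ (n : ℕ) (N : ModuleCat.{u} R),
      r ∈ Module.annihilator R (((Tor (ModuleCat.{u} R) (n + 1)).obj M).obj N) := by
  obtain ⟨n, a, b, r, hr, hba⟩ :=
    exists_comp_eq_smul_id_of_projective_localizedModule (M := M) p.asIdeal.primeCompl
  exact ⟨r, hr, fun n N ↦ mem_annihilator_tor_succ_of_comp_eq_smul_id hba N n⟩

theorem exists_mem_support_tor_one_quotient_of_not_free [Module.Finite R M]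
    (hp : ¬ Module.Free (Localization.AtPrime p.asIdeal)
      (LocalizedModule p.asIdeal.primeCompl M)) :
    ∃ I : Ideal R,
      p ∈ Module.support R (((Tor (ModuleCat.{u} R) 1).obj M).obj (ModuleCat.of R (R ⧸ I))) := by
  contrapose! hp
  have : Module.Flat (Localization.AtPrime p.asIdeal) (LocalizedModule p.asIdeal.primeCompl M) := by
    refine flat_localizedModule_of_subsingleton_localizedModule_ker_lTensor _ fun I _ ↦ ?_
    have hI := support_ker_lTensor_subtype_ker_subset_support_tor_one M
      (N := ModuleCat.of R (R ⧸ I)) (f := I.mkQ) I.mkQ_surjective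
    rw [Submodule.ker_mkQ] at hI
    exact Module.notMem_support_iff.1 fun h ↦ hp I (hI h)
  exact Module.free_of_flat_of_isLocalRing

end Stalk

theorem stmt14_general (R : Type) [CommRing R] (M : ModuleCat.{0} R)
    [Module.FinitePresentation R M] :
    nonfreeLocus R M =
        (⋃ (i : ℕ) (_ : 0 < i) (N : ModuleCat.{0} R) (_ : Module.Finite R N),
          Module.support R (TorMod R i M N)) ∧
    nonfreeLocus R M = PrimeSpectrum.zeroLocus
        ((⨅ (i : ℕ) (_ : 0 < i) (N : ModuleCat.{0} R) (_ : Module.Finite R N),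
          Module.annihilator R (TorMod R i M N) : Ideal R) : Set R) := by
  set torSupport := ⋃ (i : ℕ) (_ : 0 < i) (N : ModuleCat.{0} R) (_ : Module.Finite R N),
    Module.support R (TorMod R i M N) with torSupport_def
  set torAnnihilator : Ideal R := ⨅ (i : ℕ) (_ : 0 < i) (N : ModuleCat.{0} R)
    (_ : Module.Finite R N), Module.annihilator R (TorMod R i M N) with torAnnihilator_def
  have nonfree_subset : nonfreeLocus R M ⊆ torSupport := fun p hp ↦ by
    obtain ⟨I, hI⟩ := exists_mem_support_tor_one_quotient_of_not_free hp
    simp only [torSupport_def, Set.mem_iUnion]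
    exact ⟨1, one_pos, _, inferInstanceAs (Module.Finite R (R ⧸ I)), hI⟩
  have support_subset : torSupport ⊆ PrimeSpectrum.zeroLocus torAnnihilator := by
    simp only [torSupport_def, Set.iUnion_subset_iff]
    exact fun i hi N hN p hp ↦ ((iInf₂_le i hi).trans (iInf₂_le N hN)).trans
      (Module.annihilator_le_of_mem_support hp)
  have zeroLocus_subset : PrimeSpectrum.zeroLocus torAnnihilator ⊆ nonfreeLocus R M := by
    intro p hp hfree
    have : Module.Free _ _ := hfree
    obtain ⟨r, hrp, hr⟩ :=
      exists_notMem_forall_mem_annihilator_tor_succ_of_projective (M := M) (p := p) .of_free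
    refine hrp (hp ?_)
    simp only [torAnnihilator_def, SetLike.mem_coe, Ideal.mem_iInf]
    rintro (_ | i) hi N -
    · exact absurd hi (lt_irrefl 0)
    · exact hr i N
  exact ⟨nonfree_subset.antisymm (support_subset.trans zeroLocus_subset),
    (nonfree_subset.trans support_subset).antisymm zeroLocus_subset⟩

/-- Let `R` be a noetherian commutative ring and `M` a finitely generated
`R`-module. Then the nonfree locus of `M`, the union of the supports of `Tor_i(M,N)` over
`i > 0` and finitely generated `N`, and `V(⋂_{i>0, N} Ann Tor_i(M,N))` all coincide. -/
theorem stmt14 (R : Type) [CommRing R] [IsNoetherianRing R]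
    (M : ModuleCat.{0} R) (hM : Module.Finite R M) :
    nonfreeLocus R M =
        (⋃ (i : ℕ) (_ : 0 < i) (N : ModuleCat.{0} R) (_ : Module.Finite R N),
          Module.support R (TorMod R i M N)) ∧
    nonfreeLocus R M = PrimeSpectrum.zeroLocus
        ((⨅ (i : ℕ) (_ : 0 < i) (N : ModuleCat.{0} R) (_ : Module.Finite R N),
          Module.annihilator R (TorMod R i M N) : Ideal R) : Set R) := by
  have := Module.finitePresentation_of_finite R M
  exact stmt14_general R M

end
end

section
/- Let R be a commutative noetherian ring and M a finitely generated R-module. Then the following three subsets of Spec R coincide: (i) the nonfree locus NF(M), i.e., the set of prime ideals p such that M_p is not a free R_p-module; (ii) the union over all integers i > 0 and all finitely generated R-modules N of the supports of Ext_R^i(M,N); (iii) V(⋂_{i>0, N} Ann_R Ext_R^i(M,N)), the set of prime ideals containing the intersection of the annihilators of Ext_R^i(M,N) over all i > 0 and all finitely generated R-modules N. -/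
open CategoryTheory IsLocalRing

noncomputable section

/-!
Let `f : F → M` be a surjection from a finitely generated free module, with kernel `K`, and let `I`
be the ideal of all `r` for which multiplication by `r` on `M` lifts along `f`. Clearing
denominators in a splitting of `f` at a prime `p` shows that `M_p` is free if and only if `I ⊄ p`.
Multiplication by `r ∈ I` factors through `F`, so `I` annihilates every `Ext^i(M, N)` with `i > 0`.
Conversely, if `r` annihilates the class of `0 → K → F → M → 0` in `Ext^1(M, K)`, then the extension
pulled back along `r` splits, that is, `r ∈ I`. Hence `I` is the intersection of the annihilators,
and `Ext^1(M, K)` alone already has support `V(I)`.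
-/

lemma localizedModule_map_comp {R M N P : Type*} [CommSemiring R] (S : Submonoid R)
    [AddCommMonoid M] [Module R M] [AddCommMonoid N] [Module R N] [AddCommMonoid P] [Module R P]
    (g : N →ₗ[R] P) (f : M →ₗ[R] N) :
    LocalizedModule.map S (g ∘ₗ f) = LocalizedModule.map S g ∘ₗ LocalizedModule.map S f := by
  ext x
  induction x using LocalizedModule.induction_on with
  | h m s => simp only [LinearMap.comp_apply, LocalizedModule.map_mk]

lemma single₀_map_smul {R C : Type*} [Semiring R] [Category* C] [Preadditive C] [Linear R C]
    [Limits.HasZeroObject C] {X Y : C} (r : R) (f : X ⟶ Y) :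
    (ChainComplex.single₀ C).map (r • f) = r • (ChainComplex.single₀ C).map f := by
  ext
  rw [HomologicalComplex.smul_f_apply]
  simp only [ChainComplex.single₀_map_f_zero]
  rfl

section Ext

variable {R C : Type*} [Ring R] [Category* C] [Abelian C] [Linear R C] [EnoughProjectives C]

variable {X : C} (P : ProjectiveResolution X) (Y : C) (n : ℕ)

/-- `Ext^(n+1)(X, Y)` as cocycles modulo coboundaries, computed on a projective resolution. -/
def extSuccEquiv :
    ((Ext R C (n + 1)).obj (Opposite.op X)).obj Y ≃ₗ[R]
      LinearMap.ker (Linear.leftComp R Y (P.complex.d (n + 2) (n + 1))) ⧸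
        (LinearMap.range (Linear.leftComp R Y (P.complex.d (n + 1) n))).submoduleOf
          (LinearMap.ker (Linear.leftComp R Y (P.complex.d (n + 2) (n + 1)))) :=
  let K := P.complex.linearYonedaObj R Y
  (P.isoExt (n + 1) Y).toLinearEquiv ≪≫ₗ
    (ShortComplex.homologyMapIso
      (K.isoSc' n (n + 1) (n + 2) (by simp) (by simp))).toLinearEquiv ≪≫ₗ
    (K.sc' n (n + 1) (n + 2)).moduleCatHomologyIso.toLinearEquiv ≪≫ₗ
    Submodule.quotEquivOfEq _ _ (LinearMap.range_codRestrict _ _ _)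

/-- The class in `Ext^(n+1)(X, Y)` of a cocycle `P_{n+1} ⟶ Y`, where `P` is a projective
resolution of `X`, as a linear map on the module of cocycles. -/
def extClass :
    LinearMap.ker (Linear.leftComp R Y (P.complex.d (n + 2) (n + 1))) →ₗ[R]
      ((Ext R C (n + 1)).obj (Opposite.op X)).obj Y :=
  (extSuccEquiv P Y n).symm.toLinearMap ∘ₗ Submodule.mkQ _

lemma extClass_surjective : Function.Surjective (extClass (R := R) P Y n) :=
  (extSuccEquiv P Y n).symm.surjective.comp (Submodule.mkQ_surjective _)

lemma extClass_eq_zero_iff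
    (φ : LinearMap.ker (Linear.leftComp R Y (P.complex.d (n + 2) (n + 1)))) :
    extClass P Y n φ = 0 ↔ ∃ ψ : P.complex.X n ⟶ Y, P.complex.d (n + 1) n ≫ ψ = φ.1 := by
  rw [extClass, LinearMap.comp_apply, LinearEquiv.coe_coe, LinearEquiv.map_eq_zero_iff,
    Submodule.mkQ_apply, Submodule.Quotient.mk_eq_zero]
  rfl

lemma smul_ext_succ_eq_zero_of_factors_projective {Q : C} [Projective Q] {r : R} {s : X ⟶ Q}
    {p : Q ⟶ X} (hsp : s ≫ p = r • 𝟙 X) (c : ((Ext R C (n + 1)).obj (Opposite.op X)).obj Y) :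
    r • c = 0 := by
  let P := projectiveResolution X
  let S := ProjectiveResolution.self Q
  have homotopy : Homotopy (r • 𝟙 P.complex)
      (ProjectiveResolution.lift s P S ≫ ProjectiveResolution.lift p S P) :=
    ProjectiveResolution.liftHomotopy (r • 𝟙 X) _ _
      (by simp [single₀_map_smul])
      (by simp [← hsp])
  obtain ⟨⟨φ, hφ⟩, rfl⟩ := extClass_surjective P Y n c
  rw [← map_smul, extClass_eq_zero_iff]
  refine ⟨homotopy.hom n (n + 1) ≫ φ, ?_⟩
  have lift_eq_zero : (ProjectiveResolution.lift s P S).f (n + 1) = 0 :=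
    (HomologicalComplex.isZero_single_obj_X _ 0 Q (n + 1) (by simp)).eq_of_tgt _ _
  have hφ : P.complex.d (n + 2) (n + 1) ≫ φ = 0 := hφ
  have comm := homotopy.comm (n + 1) =≫ φ
  rw [dNext_eq _ (i' := n) (by simp), prevD_eq _ (j' := n + 2) (by simp)] at comm
  simpa [lift_eq_zero, hφ] using comm.symm

lemma exists_ext_one_forall_smul_eq_zero_imp_exists_lift {S : ShortComplex C} (hS : S.ShortExact) :
    ∃ c : ((Ext R C 1).obj (Opposite.op S.X₃)).obj S.X₁,
      ∀ r : R, r • c = 0 → ∃ s : S.X₃ ⟶ S.X₂, s ≫ S.g = r • 𝟙 S.X₃ := by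
  have := hS.mono_f
  have := hS.epi_g
  let P := projectiveResolution S.X₃
  let π : P.complex.X 0 ⟶ S.X₃ := P.π.f 0
  have d_π : P.complex.d 1 0 ≫ π = 0 := P.complex_d_comp_π_f_zero
  let a : P.complex.X 0 ⟶ S.X₂ := Projective.factorThru π S.g
  have a_g : a ≫ S.g = π := Projective.factorThru_comp _ _
  let φ : P.complex.X 1 ⟶ S.X₁ := hS.exact.lift (P.complex.d 1 0 ≫ a) (by simp [a_g, d_π])
  have φ_f : φ ≫ S.f = P.complex.d 1 0 ≫ a := hS.exact.lift_f _ _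
  have d_φ : P.complex.d 2 1 ≫ φ = 0 := by simp [← cancel_mono S.f, φ_f]
  refine ⟨extClass P S.X₁ 0 ⟨φ, d_φ⟩, fun r hr ↦ ?_⟩
  rw [← map_smul, extClass_eq_zero_iff] at hr
  obtain ⟨ψ, hψ : P.complex.d 1 0 ≫ ψ = r • φ⟩ := hr
  have d_sub : P.complex.d 1 0 ≫ (r • a - ψ ≫ S.f) = 0 := by
    simp [reassoc_of% hψ, φ_f]
  have : Epi (ShortComplex.mk _ _ d_π).g := inferInstanceAs (Epi (P.π.f 0))
  let s : S.X₃ ⟶ S.X₂ := P.exact₀.desc (r • a - ψ ≫ S.f) d_sub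
  have π_s : π ≫ s = r • a - ψ ≫ S.f := P.exact₀.g_desc _ _
  refine ⟨s, ?_⟩
  rw [← cancel_epi π, reassoc_of% π_s]
  simp [a_g]

end Ext

section SplittingIdeal

variable {R M F : Type*} [CommRing R] [AddCommGroup M] [Module R M] [AddCommGroup F] [Module R F]

/-- The ideal of all `r` such that multiplication by `r` on `M` lifts along `f : F → M`. It is the
unit ideal exactly when `f` is a split surjection. -/
def splittingIdeal (f : F →ₗ[R] M) : Ideal R :=
  (LinearMap.range (f.compRight R : (M →ₗ[R] F) →ₗ[R] M →ₗ[R] M)).comap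
    (LinearMap.toSpanSingleton R (M →ₗ[R] M) LinearMap.id)

lemma mem_splittingIdeal {f : F →ₗ[R] M} {r : R} :
    r ∈ splittingIdeal f ↔ ∃ s : M →ₗ[R] F, f ∘ₗ s = r • LinearMap.id :=
  Iff.rfl

lemma exists_mem_splittingIdeal_of_projective_localizedModule [Module.FinitePresentation R M]
    {f : F →ₗ[R] M} (hf : Function.Surjective f) (S : Submonoid R)
    [Module.Projective (Localization S) (LocalizedModule S M)] :
    ∃ r ∈ S, r ∈ splittingIdeal f := by
  obtain ⟨σ, hσ⟩ := Module.projective_lifting_property (LocalizedModule.map S f) LinearMap.id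
    (LocalizedModule.map_surjective S f hf)
  obtain ⟨⟨s, u⟩, hs : u • σ = LocalizedModule.map S s⟩ :=
    IsLocalizedModule.surj S (LocalizedModule.map S) σ
  have map_comp_eq : LocalizedModule.map S (f ∘ₗ s) =
      LocalizedModule.map S (u.1 • LinearMap.id) := by
    rw [localizedModule_map_comp, ← hs, Submonoid.smul_def, ← algebraMap_smul (Localization S),
      LinearMap.comp_smul, hσ, algebraMap_smul, map_smul, LocalizedModule.map_id]
  obtain ⟨v, hv⟩ := IsLocalizedModule.exists_of_eq (S := S) map_comp_eq
  refine ⟨v * u, (v * u).2, mem_splittingIdeal.2 ⟨v.1 • s, ?_⟩⟩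
  rw [LinearMap.comp_smul, mul_smul]
  exact hv

lemma projective_localizedModule_of_mem_splittingIdeal [Module.Projective R F] {f : F →ₗ[R] M}
    {S : Submonoid R} {r : R} (hrS : r ∈ S) (hrf : r ∈ splittingIdeal f) :
    Module.Projective (Localization S) (LocalizedModule S M) := by
  obtain ⟨s, hs⟩ := mem_splittingIdeal.1 hrf
  obtain ⟨w, hw⟩ := IsLocalization.map_units (Localization S) (⟨r, hrS⟩ : S)
  have map_comp_map : LocalizedModule.map S f ∘ₗ LocalizedModule.map S s = w.1 • LinearMap.id := by
    rw [← localizedModule_map_comp, hs, map_smul, LocalizedModule.map_id, hw, algebraMap_smul]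
  refine Module.Projective.of_split (w⁻¹.1 • LocalizedModule.map S s) (LocalizedModule.map S f) ?_
  rw [LinearMap.comp_smul, map_comp_map, smul_smul, Units.inv_mul, one_smul]

lemma compl_freeLocus_eq_zeroLocus_splittingIdeal [Module.FinitePresentation R M]
    [Module.Projective R F] {f : F →ₗ[R] M} (hf : Function.Surjective f) :
    (Module.freeLocus R M)ᶜ = PrimeSpectrum.zeroLocus (splittingIdeal f : Set R) := by
  ext p
  rw [Set.mem_compl_iff, Module.mem_freeLocus, PrimeSpectrum.mem_zeroLocus, SetLike.coe_subset_coe,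
    not_iff_comm, SetLike.not_le_iff_exists]
  constructor
  · rintro ⟨r, hrf, hrp⟩
    have := projective_localizedModule_of_mem_splittingIdeal (S := p.asIdeal.primeCompl) hrp hrf
    exact Module.free_of_flat_of_isLocalRing
  · intro _
    obtain ⟨r, hrp, hrf⟩ :=
      exists_mem_splittingIdeal_of_projective_localizedModule hf p.asIdeal.primeCompl
    exact ⟨r, hrf, hrp⟩

end SplittingIdeal

section AnnihilatorExt

universe u v

variable {R : Type u} [CommRing R] [Small.{v} R] {M F : Type v} [AddCommGroup M] [Module R M]
  [AddCommGroup F] [Module R F]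

lemma splittingIdeal_le_annihilator_ext_succ [Module.Projective R F] (f : F →ₗ[R] M) (n : ℕ)
    (N : ModuleCat.{v} R) :
    splittingIdeal f ≤ Module.annihilator R
      (((Ext R (ModuleCat.{v} R) (n + 1)).obj (Opposite.op (ModuleCat.of R M))).obj N) := by
  intro r hr
  obtain ⟨s, hs⟩ := mem_splittingIdeal.1 hr
  have : Projective (ModuleCat.of R F) := (IsProjective.iff_projective F).1 inferInstance
  have factors : ModuleCat.ofHom s ≫ ModuleCat.ofHom f = r • 𝟙 (ModuleCat.of R M) :=
    ModuleCat.hom_ext hs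
  exact Module.mem_annihilator.2 (smul_ext_succ_eq_zero_of_factors_projective N n factors)

lemma exists_ext_one_annihilator_span_le_splittingIdeal {f : F →ₗ[R] M}
    (hf : Function.Surjective f) :
    ∃ c : ((Ext R (ModuleCat.{v} R) 1).obj (Opposite.op (ModuleCat.of R M))).obj
        (ModuleCat.of R (LinearMap.ker f)),
      (Submodule.span R {c}).annihilator ≤ splittingIdeal f := by
  obtain ⟨c, hc⟩ := exists_ext_one_forall_smul_eq_zero_imp_exists_lift (R := R)
    (LinearMap.shortExact_shortComplexKer hf)
  refine ⟨c, fun r hr ↦ ?_⟩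
  obtain ⟨s, hs⟩ := hc r (Submodule.mem_annihilator_span_singleton c r |>.1 hr)
  exact mem_splittingIdeal.2 ⟨s.hom, ModuleCat.hom_ext_iff.1 hs⟩

end AnnihilatorExt

theorem stmt15_general (R : Type) [CommRing R] (M : ModuleCat.{0} R)
    [Module.FinitePresentation R M] :
    nonfreeLocus R M =
        (⋃ (i : ℕ) (_ : 0 < i) (N : ModuleCat.{0} R) (_ : Module.Finite R N),
          Module.support R (ExtMod R i M N)) ∧
    nonfreeLocus R M = PrimeSpectrum.zeroLocus
        ((⨅ (i : ℕ) (_ : 0 < i) (N : ModuleCat.{0} R) (_ : Module.Finite R N),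
          Module.annihilator R (ExtMod R i M N) : Ideal R) : Set R) := by
  obtain ⟨n, f, hf⟩ := Module.Finite.exists_fin' R M
  have locus_eq : nonfreeLocus R M = PrimeSpectrum.zeroLocus (splittingIdeal f : Set R) :=
    compl_freeLocus_eq_zeroLocus_splittingIdeal hf
  have ker_finite : Module.Finite R (LinearMap.ker f) :=
    Module.Finite.of_fg (Module.FinitePresentation.fg_ker f hf)
  have le_annihilator : ∀ i > 0, ∀ N, splittingIdeal f ≤ Module.annihilator R (ExtMod R i M N)
    | i + 1, _, N => splittingIdeal_le_annihilator_ext_succ f i N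
  obtain ⟨c, hc⟩ := exists_ext_one_annihilator_span_le_splittingIdeal hf
  rw [locus_eq]
  constructor
  · refine subset_antisymm (fun p hp ↦ ?_) ?_
    · simp only [Set.mem_iUnion]
      exact ⟨1, one_pos, _, ker_finite,
        Module.mem_support_iff_exists_annihilator.2 ⟨c, hc.trans hp⟩⟩
    · simp only [Set.iUnion_subset_iff]
      exact fun i hi N _ p hp ↦
        (le_annihilator i hi N).trans (Module.annihilator_le_of_mem_support hp)
  · congr 2
    refine le_antisymm (le_iInf₂ fun i hi ↦ le_iInf₂ fun N _ ↦ le_annihilator i hi N)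
      fun r hr ↦ hc ?_
    simp only [Submodule.mem_iInf] at hr
    exact (Submodule.mem_annihilator_span_singleton c r).2
      (Module.mem_annihilator.1 (hr 1 one_pos _ ker_finite) c)

/-- Let `R` be a noetherian commutative ring and `M` a finitely generated
`R`-module. Then the nonfree locus of `M`, the union of the supports of `Ext^i(M,N)` over
`i > 0` and finitely generated `N`, and `V(⋂_{i>0, N} Ann Ext^i(M,N))` all coincide. -/
theorem stmt15 (R : Type) [CommRing R] [IsNoetherianRing R]
    (M : ModuleCat.{0} R) (hM : Module.Finite R M) :
    nonfreeLocus R M =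
        (⋃ (i : ℕ) (_ : 0 < i) (N : ModuleCat.{0} R) (_ : Module.Finite R N),
          Module.support R (ExtMod R i M N)) ∧
    nonfreeLocus R M = PrimeSpectrum.zeroLocus
        ((⨅ (i : ℕ) (_ : 0 < i) (N : ModuleCat.{0} R) (_ : Module.Finite R N),
          Module.annihilator R (ExtMod R i M N) : Ideal R) : Set R) := by
  have := Module.finitePresentation_of_finite R M
  exact stmt15_general R M

end
end
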